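/- Let $(X_1, \ldots, X_n)$ be a multivariate Gaussian vector with mean $\mu$ and nondegenerate covariance matrix $\Sigma$ ($\det \Sigma > 0$). Then $P(\sum_{i=1}^n e^{X_i} > b) = (1 + o(1)) \sum_{i=1}^n P(e^{X_i} > b)$ as $b \to \infty$. -/

import Mathlib

open Real Filter MeasureTheory ProbabilityTheory Matrix

/-!
Put `L = log b`. By Bonferroni, `∑ i, P (L < X i)` exceeds `P (exp L < ∑ i, exp (X i))` by at most
the sum of the probabilities `P (2 * L < X i + X j)`. Conversely, if `exp L < ∑ i, exp (X i)` while
every summand is at most `(1 - δ) * exp L`, then the largest summand exceeds `exp L / n` and another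
one exceeds `δ * exp L / n`, so that `X i + X j > 2 * L + log (δ / n ^ 2)` for some `i ≠ j`.

With `δ = L⁻²` both error terms are negligible. A Gaussian tail at `L` is insensitive to the shift
`log (1 - δ)`, which is `o(1 / L)`. The thresholds for the pair sums stay asymptotic to `2 * L`, and
`P (X i + X j > 2 * L)` decays like `exp (-2 * L ^ 2 / Var (X i + X j))`, faster than the largest
marginal tail, because positive definiteness gives
`Var (X i + X j) < 2 * Var (X i) + 2 * Var (X j) ≤ 4 * max (Var (X i)) (Var (X j))`.
-/

open Asymptotics
open scoped NNReal Topology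

section GaussianTail

variable {Ω : Type*} [MeasurableSpace Ω] {P : Measure Ω}

theorem antitoneOn_gaussianPDFReal (m : ℝ) (v : ℝ≥0) :
    AntitoneOn (gaussianPDFReal m v) (Set.Ici m) := by
  intro x hx y _ hxy
  have hsq : (x - m) ^ 2 ≤ (y - m) ^ 2 :=
    pow_le_pow_left₀ (sub_nonneg.2 hx) (sub_le_sub_right hxy m) 2
  simp only [gaussianPDFReal_def]
  gcongr

theorem gaussianPDFReal_eq_exp_mul (m : ℝ) (v : ℝ≥0) (x y : ℝ) :
    gaussianPDFReal m v x =
      exp (((y - m) ^ 2 - (x - m) ^ 2) / (2 * v)) * gaussianPDFReal m v y := by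
  simp only [gaussianPDFReal_def]
  rw [mul_left_comm, ← Real.exp_add]
  ring_nf

variable {m : ℝ} {v : ℝ≥0}

theorem measureReal_gaussianReal_eq_integral (hv : v ≠ 0) (s : Set ℝ) :
    (gaussianReal m v).real s = ∫ x in s, gaussianPDFReal m v x := by
  rw [measureReal_def, gaussianReal_apply_eq_integral m hv, ENNReal.toReal_ofReal]
  exact integral_nonneg fun x => gaussianPDFReal_nonneg m v x

theorem measureReal_gaussianReal_Ioc_le (hv : v ≠ 0) {x y : ℝ} (hx : m ≤ x) (hxy : x ≤ y) :
    (gaussianReal m v).real (Set.Ioc x y) ≤ (y - x) * gaussianPDFReal m v x := by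
  rw [measureReal_gaussianReal_eq_integral hv]
  calc ∫ z in Set.Ioc x y, gaussianPDFReal m v z
      ≤ ∫ _ in Set.Ioc x y, gaussianPDFReal m v x :=
        setIntegral_mono_on (integrable_gaussianPDFReal m v).integrableOn
          (integrableOn_const (by simp)) measurableSet_Ioc fun z hz =>
          antitoneOn_gaussianPDFReal m v hx (hx.trans hz.1.le) hz.1.le
    _ = (y - x) * gaussianPDFReal m v x := by simp [hxy]

theorem mul_gaussianPDFReal_le_measureReal_Ioi (hv : v ≠ 0) {x y : ℝ} (hx : m ≤ x)
    (hxy : x ≤ y) :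
    (y - x) * gaussianPDFReal m v y ≤ (gaussianReal m v).real (Set.Ioi x) :=
  calc (y - x) * gaussianPDFReal m v y
      = ∫ _ in Set.Ioc x y, gaussianPDFReal m v y := by simp [hxy]
    _ ≤ ∫ z in Set.Ioc x y, gaussianPDFReal m v z :=
        setIntegral_mono_on (integrableOn_const (by simp))
          (integrable_gaussianPDFReal m v).integrableOn measurableSet_Ioc fun z hz =>
          antitoneOn_gaussianPDFReal m v (hx.trans hz.1.le) (hx.trans hxy) hz.2
    _ = (gaussianReal m v).real (Set.Ioc x y) := (measureReal_gaussianReal_eq_integral hv _).symm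
    _ ≤ (gaussianReal m v).real (Set.Ioi x) := measureReal_mono Set.Ioc_subset_Ioi_self

theorem measureReal_gaussianReal_Ioi_pos (hv : v ≠ 0) (x : ℝ) :
    0 < (gaussianReal m v).real (Set.Ioi x) := by
  have hpdf : 0 < gaussianPDFReal m v (max m x + 1) := gaussianPDFReal_pos m v _ hv
  calc 0 < (max m x + 1 - max m x) * gaussianPDFReal m v (max m x + 1) := by simpa using hpdf
    _ ≤ (gaussianReal m v).real (Set.Ioi (max m x)) :=
        mul_gaussianPDFReal_le_measureReal_Ioi hv (le_max_left m x) (by simp)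
    _ ≤ (gaussianReal m v).real (Set.Ioi x) :=
        measureReal_mono (Set.Ioi_subset_Ioi (le_max_right m x))

theorem isBigO_gaussianPDFReal_of_tendsto_mul {e : ℝ → ℝ}
    (he : Tendsto (fun L => L * e L) atTop (𝓝 0)) :
    (fun L => gaussianPDFReal m v (L - e L)) =O[atTop]
      fun L => gaussianPDFReal m v (L + L⁻¹) := by
  have he0 : Tendsto e atTop (𝓝 0) := by
    refine (he.div_atTop tendsto_id).congr' ?_
    filter_upwards [eventually_ne_atTop 0] with L hL
    exact mul_div_cancel_left₀ _ hL
  have hexponent : Tendsto (fun L => ((L + L⁻¹ - m) ^ 2 - (L - e L - m) ^ 2) / (2 * v)) atTop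
      (𝓝 ((1 + 0) * (2 + 0) / (2 * (v : ℝ)))) := by
    have hsmall : Tendsto (fun L => (L⁻¹ - e L - 2 * m) / L) atTop (𝓝 0) :=
      ((tendsto_inv_atTop_zero.sub he0).sub_const (2 * m)).div_atTop tendsto_id
    refine Tendsto.div_const (((he.const_add 1).mul (hsmall.const_add 2)).congr' ?_) _
    filter_upwards [eventually_ne_atTop 0] with L hL
    field_simp
    ring
  have hratio : (fun L => exp (((L + L⁻¹ - m) ^ 2 - (L - e L - m) ^ 2) / (2 * v))) =O[atTop]
      fun _ => (1 : ℝ) :=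
    ((Real.continuous_exp.tendsto _).comp hexponent).isBigO_one ℝ
  refine (hratio.mul (isBigO_refl (fun L => gaussianPDFReal m v (L + L⁻¹)) atTop)).congr
    (fun L => ?_) fun L => one_mul _
  exact (gaussianPDFReal_eq_exp_mul m v _ _).symm

theorem isBigO_measureReal_gaussianReal_Ioc (hv : v ≠ 0) {e : ℝ → ℝ}
    (he_nonneg : ∀ᶠ L in atTop, 0 ≤ e L) (he : Tendsto e atTop (𝓝 0)) :
    (fun L => (gaussianReal m v).real (Set.Ioc (L - e L) L)) =O[atTop]
      fun L => e L * gaussianPDFReal m v (L - e L) := by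
  refine .of_bound' ?_
  filter_upwards [he_nonneg, eventually_ge_atTop (m + 1), he.eventually_le_const one_pos]
    with L hL0 hLm hL1
  have hle := measureReal_gaussianReal_Ioc_le (m := m) hv (x := L - e L) (y := L)
    (by linarith) (by linarith)
  rw [sub_sub_cancel] at hle
  simpa only [Real.norm_eq_abs, abs_of_nonneg measureReal_nonneg] using
    hle.trans (le_abs_self _)

theorem isBigO_mul_gaussianPDFReal_add (hv : v ≠ 0) {d : ℝ → ℝ} (hd : ∀ᶠ L in atTop, 0 ≤ d L) :
    (fun L => d L * gaussianPDFReal m v (L + d L)) =O[atTop]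
      fun L => (gaussianReal m v).real (Set.Ioi L) := by
  refine .of_bound' ?_
  filter_upwards [eventually_ge_atTop m, hd] with L hLm hL0
  have hle := mul_gaussianPDFReal_le_measureReal_Ioi hv hLm (le_add_of_nonneg_right hL0)
  rw [add_sub_cancel_left] at hle
  rwa [Real.norm_of_nonneg (mul_nonneg hL0 (gaussianPDFReal_nonneg m v _)),
    Real.norm_of_nonneg measureReal_nonneg]

theorem isLittleO_measureReal_gaussianReal_Ioc (hv : v ≠ 0) {e : ℝ → ℝ}
    (he_nonneg : ∀ᶠ L in atTop, 0 ≤ e L) (he : Tendsto (fun L => L * e L) atTop (𝓝 0)) :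
    (fun L => (gaussianReal m v).real (Set.Ioc (L - e L) L)) =o[atTop]
      fun L => (gaussianReal m v).real (Set.Ioi L) := by
  have he_inv : e =o[atTop] fun L : ℝ => L⁻¹ := by
    rw [isLittleO_iff_tendsto']
    · simpa only [div_inv_eq_mul, mul_comm] using he
    · filter_upwards [eventually_ne_atTop 0] with L hL h0
      exact absurd h0 (inv_ne_zero hL)
  have hinv_nonneg : ∀ᶠ L : ℝ in atTop, 0 ≤ L⁻¹ :=
    (eventually_ge_atTop 0).mono fun L hL => inv_nonneg.2 hL
  calc (fun L => (gaussianReal m v).real (Set.Ioc (L - e L) L))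
      =O[atTop] fun L => e L * gaussianPDFReal m v (L - e L) :=
        isBigO_measureReal_gaussianReal_Ioc hv he_nonneg
          (he_inv.trans_tendsto tendsto_inv_atTop_zero)
    _ =o[atTop] fun L => L⁻¹ * gaussianPDFReal m v (L + L⁻¹) :=
        he_inv.mul_isBigO (isBigO_gaussianPDFReal_of_tendsto_mul he)
    _ =O[atTop] fun L => (gaussianReal m v).real (Set.Ioi L) :=
        isBigO_mul_gaussianPDFReal_add hv hinv_nonneg

theorem isLittleO_exp_measureReal_gaussianReal_Ioi (hv : v ≠ 0) {f : ℝ → ℝ} {a : ℝ}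
    (hf : Tendsto (fun L => f L / L ^ 2) atTop (𝓝 a)) (ha : a < -1 / (2 * v)) :
    (fun L => exp (f L)) =o[atTop] fun L => (gaussianReal m v).real (Set.Ioi L) := by
  have hgap : Tendsto (fun L => -(L + 1 - m) ^ 2 / (2 * v) - f L) atTop atTop := by
    have hshift : Tendsto (fun L : ℝ => 1 + (1 - m) / L) atTop (𝓝 (1 + 0)) :=
      (tendsto_const_nhds.div_atTop tendsto_id).const_add 1
    have hlim := ((hshift.pow 2).neg.div_const (2 * (v : ℝ))).sub hf
    refine (hlim.pos_mul_atTop (by simpa using ha) (tendsto_pow_atTop two_ne_zero)).congr' ?_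
    filter_upwards [eventually_ne_atTop 0] with L hL
    field_simp
    ring
  have hpdf : (fun L => exp (f L)) =o[atTop] fun L => gaussianPDFReal m v (L + 1) := by
    simp only [gaussianPDFReal_def]
    exact (isLittleO_const_mul_right_iff (by positivity)).2
      (isLittleO_exp_comp_exp_comp.2 hgap)
  refine hpdf.trans_isBigO ?_
  simpa only [one_mul] using
    isBigO_mul_gaussianPDFReal_add (d := fun _ => 1) hv (.of_forall fun _ => zero_le_one)

theorem hasSubgaussianMGF_mono {Y : Ω → ℝ} {c c' : ℝ≥0} (hY : HasSubgaussianMGF Y c P)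
    (hcc' : c ≤ c') : HasSubgaussianMGF Y c' P where
  integrable_exp_mul := hY.integrable_exp_mul
  mgf_le t := (hY.mgf_le t).trans (by gcongr)

theorem hasSubgaussianMGF_sub_of_hasLaw_gaussianReal {Y : Ω → ℝ}
    (hY : HasLaw Y (gaussianReal m v) P) : HasSubgaussianMGF (fun ω => Y ω - m) v P := by
  have hcentered : HasLaw (fun ω => Y ω - m) (gaussianReal 0 v) P := by
    simpa only [sub_self] using gaussianReal_sub_const hY m
  refine ⟨fun t => ?_, fun t => ?_⟩
  · refine Integrable.comp_aemeasurable (g := fun y => exp (t * y)) ?_ hcentered.aemeasurable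
    rw [hcentered.map_eq]
    exact integrable_exp_mul_gaussianReal t
  · simp [mgf_gaussianReal hcentered.map_eq]

theorem isLittleO_measureReal_lt_of_hasSubgaussianMGF [IsFiniteMeasure P] {Y : Ω → ℝ} {m' : ℝ}
    {c : ℝ≥0} (hY : HasSubgaussianMGF (fun ω => Y ω - m') c P) {u : ℝ → ℝ} {r : ℝ≥0}
    (hu : Tendsto (fun L => u L / L) atTop (𝓝 r)) (hc : c < r ^ 2 * v) :
    (fun L => P.real {ω | u L < Y ω}) =o[atTop]
      fun L => (gaussianReal m v).real (Set.Ioi L) := by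
  obtain ⟨hr, hv⟩ : r ≠ 0 ∧ v ≠ 0 := by
    constructor <;> rintro rfl <;> simp at hc
  obtain ⟨d, hcd, hd⟩ := exists_between hc
  have hd0 : 0 < d := c.2.trans_lt hcd
  have hu_top : Tendsto u atTop atTop := by
    refine (hu.pos_mul_atTop (by positivity) tendsto_id).congr' ?_
    filter_upwards [eventually_ne_atTop 0] with L hL
    exact div_mul_cancel₀ _ hL
  have hexponent : Tendsto (fun L => -(u L - m') ^ 2 / (2 * d) / L ^ 2) atTop
      (𝓝 (-((r : ℝ) - 0) ^ 2 / (2 * d))) := by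
    have hshift : Tendsto (fun L : ℝ => m' / L) atTop (𝓝 0) :=
      tendsto_const_nhds.div_atTop tendsto_id
    refine (((hu.sub hshift).pow 2).neg.div_const _).congr fun L => ?_
    rw [← sub_div, div_pow]
    ring
  refine IsBigO.trans_isLittleO (.of_bound' ?_)
    (isLittleO_exp_measureReal_gaussianReal_Ioi hv hexponent ?_)
  · filter_upwards [hu_top.eventually_ge_atTop m'] with L hL
    rw [Real.norm_of_nonneg measureReal_nonneg, Real.norm_of_nonneg (exp_pos _).le]
    refine (measureReal_mono fun ω hω => ?_).trans
      ((hasSubgaussianMGF_mono hY hcd.le).measure_ge_le (sub_nonneg.2 hL))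
    exact sub_le_sub_right (le_of_lt hω) m'
  · have hd' : (d : ℝ) < r ^ 2 * v := by exact_mod_cast hd
    rw [sub_zero, neg_div, neg_div, neg_lt_neg_iff, div_lt_div_iff₀ (by positivity) (by positivity)]
    linarith [hd']

end GaussianTail

section OneBigJump

variable {ι Ω : Type*} [MeasurableSpace Ω] {P : Measure Ω}

theorem sum_measureReal_le_add_sum_offDiag [IsFiniteMeasure P] {A : ι → Set Ω}
    (s : Finset ι) (hA : ∀ i, NullMeasurableSet (A i) P) :
    ∑ i ∈ s, P.real (A i) ≤
      P.real (⋃ i ∈ s, A i) + ∑ p ∈ s.offDiag, P.real (A p.1 ∩ A p.2) := by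
  classical
  induction s using Finset.induction_on with
  | empty => simp
  | insert a s ha ih =>
    have hunion : P.real (A a) + P.real (⋃ i ∈ s, A i) =
        P.real (⋃ i ∈ insert a s, A i) + P.real (A a ∩ ⋃ i ∈ s, A i) := by
      rw [Finset.set_biUnion_insert]
      exact (measureReal_union_add_inter₀ (Finset.nullMeasurableSet_biUnion s fun i _ => hA i)
        (measure_ne_top P _) (measure_ne_top P _)).symm
    have hinter : P.real (A a ∩ ⋃ i ∈ s, A i) ≤ ∑ i ∈ s, P.real (A a ∩ A i) := by
      rw [Set.inter_iUnion₂]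
      exact measureReal_biUnion_finset_le s _
    have hpairs : ∑ p ∈ s.offDiag, P.real (A p.1 ∩ A p.2) + ∑ i ∈ s, P.real (A a ∩ A i) ≤
        ∑ p ∈ (insert a s).offDiag, P.real (A p.1 ∩ A p.2) := by
      have hdisj : Disjoint s.offDiag ({a} ×ˢ s) := by
        rw [Finset.disjoint_left]
        grind
      rw [Finset.offDiag_insert ha, ← Finset.sum_singleton (fun b => ∑ i ∈ s, P.real (A b ∩ A i)) a,
        ← Finset.sum_product', ← Finset.sum_union hdisj]
      exact Finset.sum_le_sum_of_subset_of_nonneg Finset.subset_union_left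
        fun _ _ _ => measureReal_nonneg
    rw [Finset.sum_insert ha]
    linarith

theorem exists_offDiag_lt_mul_of_lt_sum {K : Type*} [Field K] [LinearOrder K]
    [IsStrictOrderedRing K] {s : Finset ι} {y : ι → K} {b δ : K} (hb : 0 < b)
    (hδ : 0 ≤ δ) (hy : ∀ i ∈ s, y i ≤ b * (1 - δ)) (hsum : b < ∑ i ∈ s, y i) :
    ∃ p ∈ s.offDiag, b ^ 2 * (δ / s.card ^ 2) < y p.1 * y p.2 := by
  classical
  have hs : (0 : K) < s.card := by
    rw [Nat.cast_pos, Finset.card_pos, Finset.nonempty_iff_ne_empty]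
    rintro rfl
    exact hb.not_gt (by simpa using hsum)
  obtain ⟨i, hi, hyi⟩ : ∃ i ∈ s, b / s.card < y i := by
    apply Finset.exists_lt_of_sum_lt
    simpa [mul_div_cancel₀ _ hs.ne'] using hsum
  obtain ⟨j, hj, hyj⟩ : ∃ j ∈ s.erase i, b * δ / s.card < y j := by
    apply Finset.exists_lt_of_sum_lt
    have hcard : ((s.erase i).card : K) ≤ s.card := by
      exact_mod_cast Finset.card_le_card (Finset.erase_subset i s)
    calc ∑ _ ∈ s.erase i, b * δ / (s.card : K)
        = (s.erase i).card * (b * δ / s.card) := by simp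
      _ ≤ s.card * (b * δ / s.card) := by gcongr
      _ = b * δ := mul_div_cancel₀ _ hs.ne'
      _ < ∑ j ∈ s.erase i, y j := by
        linarith [Finset.add_sum_erase s y hi, hy i hi]
  refine ⟨(i, j), by grind, ?_⟩
  calc b ^ 2 * (δ / s.card ^ 2) = b / s.card * (b * δ / s.card) := by ring
    _ < y i * y j := mul_lt_mul'' hyi hyj (by positivity) (by positivity)

variable [Fintype ι]

theorem exists_lt_or_exists_offDiag_lt_add_of_exp_lt_sum_exp {x : ι → ℝ} {L δ : ℝ}
    (hδ : δ ∈ Set.Ioo 0 1) (hsum : exp L < ∑ i, exp (x i)) :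
    (∃ i, L + log (1 - δ) < x i) ∨
      ∃ p ∈ Finset.univ.offDiag, 2 * L + log (δ / Fintype.card ι ^ 2) < x p.1 + x p.2 := by
  refine or_iff_not_imp_left.2 fun hmax => ?_
  push Not at hmax
  have hexp (i : ι) : exp (x i) ≤ exp L * (1 - δ) := by
    rw [← exp_log (sub_pos.2 hδ.2), ← exp_add]
    exact exp_le_exp.2 (hmax i)
  obtain ⟨p, hp, hlt⟩ :=
    exists_offDiag_lt_mul_of_lt_sum (exp_pos L) hδ.1.le (fun i _ => hexp i) hsum
  have hcard : (0 : ℝ) < Fintype.card ι := by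
    exact_mod_cast Fintype.card_pos_iff.2 ⟨p.1⟩
  refine ⟨p, hp, ?_⟩
  rw [← exp_lt_exp, exp_add, exp_log (div_pos hδ.1 (by positivity)), exp_add, two_mul, exp_add,
    ← sq]
  exact hlt

variable {X : ι → Ω → ℝ}

theorem sum_measureReal_lt_le [IsFiniteMeasure P] (hX : ∀ i, AEMeasurable (X i) P) (L : ℝ) :
    ∑ i, P.real {ω | L < X i ω} ≤ P.real {ω | exp L < ∑ i, exp (X i ω)} +
      ∑ p ∈ Finset.univ.offDiag, P.real {ω | 2 * L < X p.1 ω + X p.2 ω} := by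
  refine (sum_measureReal_le_add_sum_offDiag Finset.univ fun i =>
    nullMeasurableSet_lt aemeasurable_const (hX i)).trans ?_
  refine add_le_add (measureReal_mono (Set.iUnion₂_subset fun i _ ω hω => ?_))
    (Finset.sum_le_sum fun p _ => measureReal_mono fun ω hω => ?_)
  · calc exp L < exp (X i ω) := exp_lt_exp.2 hω
      _ ≤ ∑ j, exp (X j ω) :=
        Finset.single_le_sum (f := fun j => exp (X j ω)) (fun j _ => (exp_pos _).le)
          (Finset.mem_univ i)
  · rw [Set.mem_ofPred_eq, two_mul]
    exact add_lt_add hω.1 hω.2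

theorem measureReal_exp_lt_sum_exp_le [IsFiniteMeasure P] {L δ : ℝ} (hδ : δ ∈ Set.Ioo 0 1) :
    P.real {ω | exp L < ∑ i, exp (X i ω)} ≤
      ∑ i, P.real {ω | L < X i ω} + ∑ i, P.real {ω | X i ω ∈ Set.Ioc (L + log (1 - δ)) L} +
        ∑ p ∈ Finset.univ.offDiag,
          P.real {ω | 2 * L + log (δ / Fintype.card ι ^ 2) < X p.1 ω + X p.2 ω} := by
  have hcover : {ω | exp L < ∑ i, exp (X i ω)} ⊆
      ((⋃ i ∈ Finset.univ, {ω | L < X i ω}) ∪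
        ⋃ i ∈ Finset.univ, {ω | X i ω ∈ Set.Ioc (L + log (1 - δ)) L}) ∪
      ⋃ p ∈ Finset.univ.offDiag,
        {ω | 2 * L + log (δ / Fintype.card ι ^ 2) < X p.1 ω + X p.2 ω} := by
    intro ω hω
    simp only [Set.mem_union, Set.mem_iUnion₂, Set.mem_ofPred_eq, Set.mem_Ioc, Finset.mem_univ,
      exists_prop, true_and]
    refine (exists_lt_or_exists_offDiag_lt_add_of_exp_lt_sum_exp hδ hω).imp_left ?_
    rintro ⟨i, hi⟩
    exact (lt_or_ge L (X i ω)).imp (fun h => ⟨i, h⟩) fun h => ⟨i, hi, h⟩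
  refine (measureReal_mono hcover).trans ((measureReal_union_le _ _).trans ?_)
  refine add_le_add ((measureReal_union_le _ _).trans ?_) (measureReal_biUnion_finset_le _ _)
  exact add_le_add (measureReal_biUnion_finset_le _ _) (measureReal_biUnion_finset_le _ _)

theorem isEquivalent_measureReal_exp_lt_sum_exp [IsFiniteMeasure P]
    (hX : ∀ i, AEMeasurable (X i) P) {δ : ℝ → ℝ} (hδ : ∀ᶠ L in atTop, δ L ∈ Set.Ioo 0 1)
    (hstrip : ∀ i, (fun L => P.real {ω | X i ω ∈ Set.Ioc (L + log (1 - δ L)) L}) =o[atTop]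
      fun L => ∑ i, P.real {ω | L < X i ω})
    (hpair : ∀ i j, i ≠ j → (fun L => P.real {ω | 2 * L < X i ω + X j ω}) =o[atTop]
      fun L => ∑ i, P.real {ω | L < X i ω})
    (hpair' : ∀ i j, i ≠ j →
      (fun L => P.real {ω | 2 * L + log (δ L / Fintype.card ι ^ 2) < X i ω + X j ω}) =o[atTop]
        fun L => ∑ i, P.real {ω | L < X i ω}) :
    (fun L => P.real {ω | exp L < ∑ i, exp (X i ω)}) ~[atTop]
      fun L => ∑ i, P.real {ω | L < X i ω} := by
  have hne {p : ι × ι} (hp : p ∈ Finset.univ.offDiag) : p.1 ≠ p.2 := (Finset.mem_offDiag.1 hp).2.2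
  have hstrips := IsLittleO.fun_sum fun i (_ : i ∈ Finset.univ) => hstrip i
  have hpairs := IsLittleO.fun_sum fun p hp => hpair p.1 p.2 (hne hp)
  have hpairs' := IsLittleO.fun_sum fun p hp => hpair' p.1 p.2 (hne hp)
  refine IsBigO.trans_isLittleO (.of_bound' ?_) ((hstrips.add hpairs').add hpairs)
  filter_upwards [hδ] with L hL
  have hlower := sum_measureReal_lt_le hX L
  have hupper := measureReal_exp_lt_sum_exp_le (P := P) (X := X) (L := L) hL
  have hstrips_nonneg : 0 ≤ ∑ i, P.real {ω | X i ω ∈ Set.Ioc (L + log (1 - δ L)) L} := by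
    positivity
  have hpairs_nonneg :
      0 ≤ ∑ p ∈ Finset.univ.offDiag, P.real {ω | 2 * L < X p.1 ω + X p.2 ω} := by
    positivity
  have hpairs'_nonneg : 0 ≤ ∑ p ∈ Finset.univ.offDiag,
      P.real {ω | 2 * L + log (δ L / Fintype.card ι ^ 2) < X p.1 ω + X p.2 ω} := by
    positivity
  refine le_trans ?_ (le_abs_self _)
  rw [Pi.sub_apply, Real.norm_eq_abs, abs_sub_le_iff]
  constructor <;> linarith

end OneBigJump

section LogNormal

variable {ι Ω : Type*} [MeasurableSpace Ω] {P : Measure Ω}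

theorem eventually_inv_sq_mem_Ioo : ∀ᶠ L : ℝ in atTop, (L ^ 2)⁻¹ ∈ Set.Ioo 0 1 := by
  filter_upwards [eventually_gt_atTop 1] with L hL
  exact ⟨by positivity, inv_lt_one_of_one_lt₀ (one_lt_pow₀ hL two_ne_zero)⟩

theorem tendsto_mul_neg_log_one_sub_inv_sq :
    Tendsto (fun L : ℝ => L * -log (1 - (L ^ 2)⁻¹)) atTop (𝓝 0) := by
  have hlim := ((Real.tendsto_mul_log_one_add_div_atTop (-1)).comp
    (tendsto_pow_atTop two_ne_zero)).neg.div_atTop tendsto_id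
  refine hlim.congr' ?_
  filter_upwards [eventually_ne_atTop 0] with L hL
  simp only [Function.comp_apply, id, neg_div, one_div, ← sub_eq_add_neg]
  field_simp

theorem tendsto_two_mul_add_log_inv_sq_div_div {C : ℝ} (hC : C ≠ 0) :
    Tendsto (fun L : ℝ => (2 * L + log ((L ^ 2)⁻¹ / C)) / L) atTop (𝓝 2) := by
  have hlog : Tendsto (fun L : ℝ => log L / L) atTop (𝓝 0) :=
    isLittleO_log_id_atTop.tendsto_div_nhds_zero
  have hconst : Tendsto (fun L : ℝ => log C / L) atTop (𝓝 0) :=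
    tendsto_const_nhds.div_atTop tendsto_id
  have hlim : Tendsto (fun L : ℝ => 2 - 2 * (log L / L) - log C / L) atTop (𝓝 2) := by
    simpa using ((hlog.const_mul 2).const_sub 2).sub hconst
  refine hlim.congr' ?_
  filter_upwards [eventually_ne_atTop 0] with L hL
  rw [log_div (inv_ne_zero (pow_ne_zero 2 hL)) hC, log_inv, log_pow]
  field_simp
  push_cast
  ring

theorem isLittleO_measureReal_mem_Ioc_of_hasLaw_gaussianReal {Y : Ω → ℝ} {m : ℝ} {v : ℝ≥0}
    (hY : HasLaw Y (gaussianReal m v) P) (hv : v ≠ 0) :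
    (fun L => P.real {ω | Y ω ∈ Set.Ioc (L + log (1 - (L ^ 2)⁻¹)) L}) =o[atTop]
      fun L => P.real {ω | L < Y ω} := by
  have hnonneg : ∀ᶠ L : ℝ in atTop, 0 ≤ -log (1 - (L ^ 2)⁻¹) := by
    filter_upwards [eventually_inv_sq_mem_Ioo] with L hL
    exact neg_nonneg.2 (log_nonpos (sub_nonneg.2 hL.2.le) (sub_le_self 1 hL.1.le))
  refine (isLittleO_measureReal_gaussianReal_Ioc (m := m) hv hnonneg
    tendsto_mul_neg_log_one_sub_inv_sq).congr (fun L => ?_) fun L => ?_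
  · rw [sub_neg_eq_add]
    exact (hY.measureReal_eq measurableSet_Ioc).symm
  · exact (hY.measureReal_eq measurableSet_Ioi).symm

theorem isBigO_measureReal_sum [Fintype ι] {α : Type*} {l : Filter α} (A : ι → α → Set Ω)
    (k : ι) :
    (fun a => P.real (A k a)) =O[l] fun a => ∑ i, P.real (A i a) := by
  refine .of_bound' (.of_forall fun a => ?_)
  rw [Real.norm_of_nonneg measureReal_nonneg, Real.norm_of_nonneg (by positivity)]
  exact Finset.single_le_sum (f := fun i => P.real (A i a)) (fun _ _ => measureReal_nonneg)
    (Finset.mem_univ k)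

theorem tendsto_measureReal_lt_sum_exp_div_sum [Fintype ι] {X : ι → Ω → ℝ}
    (hpos : ∀ L, 0 < ∑ i, P.real {ω | L < X i ω})
    (hequiv : (fun L => P.real {ω | exp L < ∑ i, exp (X i ω)}) ~[atTop]
      fun L => ∑ i, P.real {ω | L < X i ω}) :
    Tendsto (fun b => P.real {ω | b < ∑ i, exp (X i ω)} / ∑ i, P.real {ω | b < exp (X i ω)})
      atTop (𝓝 1) := by
  have hlim := ((isEquivalent_iff_tendsto_one (.of_forall fun L => (hpos L).ne')).1 hequiv).comp
    tendsto_log_atTop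
  refine hlim.congr' ?_
  filter_upwards [eventually_gt_atTop 0] with b hb
  simp only [Pi.div_apply, Function.comp_apply, exp_log hb, log_lt_iff_lt_exp hb]

theorem stmt11_general [Fintype ι] [Nonempty ι] {X : ι → Ω → ℝ} {m : ι → ℝ} {v : ι → ℝ≥0}
    (hX : ∀ i, HasLaw (X i) (gaussianReal (m i) (v i)) P) (hv : ∀ i, v i ≠ 0)
    (hadd : ∀ i j, i ≠ j → ∃ k, ∃ c < 4 * v k,
      HasSubgaussianMGF (fun ω => X i ω + X j ω - (m i + m j)) c P) :
    Tendsto (fun b => P.real {ω | b < ∑ i, exp (X i ω)} / ∑ i, P.real {ω | b < exp (X i ω)})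
      atTop (𝓝 1) := by
  have : IsProbabilityMeasure P := (hX (Classical.arbitrary ι)).isProbabilityMeasure
  have htail (i : ι) (L : ℝ) :
      P.real {ω | L < X i ω} = (gaussianReal (m i) (v i)).real (Set.Ioi L) :=
    (hX i).measureReal_eq measurableSet_Ioi
  have hpos (L : ℝ) : 0 < ∑ i, P.real {ω | L < X i ω} :=
    Finset.sum_pos (fun i _ => htail i L ▸ measureReal_gaussianReal_Ioi_pos (hv i) L)
      Finset.univ_nonempty
  have hle_sum (k : ι) :=
    isBigO_measureReal_sum (P := P) (l := atTop) (fun i (L : ℝ) => {ω | L < X i ω}) k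
  have hpair (u : ℝ → ℝ) (hu : Tendsto (fun L => u L / L) atTop (𝓝 2)) (i j : ι) (hij : i ≠ j) :
      (fun L => P.real {ω | u L < X i ω + X j ω}) =o[atTop]
        fun L => ∑ i, P.real {ω | L < X i ω} := by
    obtain ⟨k, c, hc, hsub⟩ := hadd i j hij
    refine IsLittleO.trans_isBigO ?_ (hle_sum k)
    simpa only [htail] using isLittleO_measureReal_lt_of_hasSubgaussianMGF (r := 2) hsub
      (by simpa using hu) (by norm_num [hc])
  have htwo : Tendsto (fun L : ℝ => 2 * L / L) atTop (𝓝 2) :=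
    tendsto_const_nhds.congr' ((eventually_ne_atTop 0).mono fun L hL =>
      (mul_div_cancel_right₀ 2 hL).symm)
  exact tendsto_measureReal_lt_sum_exp_div_sum hpos <|
    isEquivalent_measureReal_exp_lt_sum_exp (fun i => (hX i).aemeasurable)
      eventually_inv_sq_mem_Ioo
      (fun i => (isLittleO_measureReal_mem_Ioc_of_hasLaw_gaussianReal (hX i) (hv i)).trans_isBigO
        (hle_sum i))
      (hpair _ htwo) (hpair _ (tendsto_two_mul_add_log_inv_sq_div_div (by simp)))

end LogNormal

section JointlyGaussian

variable {ι Ω : Type*} [MeasurableSpace Ω] {P : Measure Ω} [Fintype ι]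

theorem dotProduct_mulVec_parallelogram (S : Matrix ι ι ℝ) (x y : ι → ℝ) :
    (x + y) ⬝ᵥ S *ᵥ (x + y) + (x - y) ⬝ᵥ S *ᵥ (x - y) =
      2 * (x ⬝ᵥ S *ᵥ x) + 2 * (y ⬝ᵥ S *ᵥ y) := by
  simp only [mulVec_add, mulVec_sub, add_dotProduct, sub_dotProduct, dotProduct_add,
    dotProduct_sub]
  ring

variable {X : ι → Ω → ℝ} {μ : ι → ℝ} {S : Matrix ι ι ℝ}

theorem exists_single_add_single_dotProduct_mulVec_lt [DecidableEq ι] (hS : S.PosDef) {i j : ι}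
    (hij : i ≠ j) :
    ∃ k, (Pi.single i 1 + Pi.single j 1) ⬝ᵥ S *ᵥ (Pi.single i 1 + Pi.single j 1) < 4 * S k k := by
  have hne : (Pi.single i 1 - Pi.single j 1 : ι → ℝ) ≠ 0 := by
    rw [sub_ne_zero]
    exact fun h => by simpa [hij] using congrFun h i
  have hpos := hS.dotProduct_mulVec_pos hne
  have hpar := dotProduct_mulVec_parallelogram S (Pi.single i 1) (Pi.single j 1)
  simp only [star_trivial] at hpos
  simp only [single_one_dotProduct, mulVec_single_one, col_apply] at hpar
  rcases le_total (S i i) (S j j) with h | h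
  · exact ⟨j, by linarith⟩
  · exact ⟨i, by linarith⟩

theorem hasLaw_apply_of_map_sum_mul
    (hX : ∀ c : ι → ℝ, P.map (fun ω => ∑ i, c i * X i ω) =
      gaussianReal (∑ i, c i * μ i) (c ⬝ᵥ S *ᵥ c).toNNReal) (i : ι) :
    HasLaw (X i) (gaussianReal (μ i) (S i i).toNNReal) P := by
  classical
  have hmap : P.map (X i) = gaussianReal (μ i) (S i i).toNNReal := by
    simpa [Pi.single_apply] using hX (Pi.single i 1)
  exact ⟨aemeasurable_of_map_neZero (hmap ▸ inferInstance), hmap⟩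

theorem hasLaw_add_of_map_sum_mul [DecidableEq ι]
    (hX : ∀ c : ι → ℝ, P.map (fun ω => ∑ i, c i * X i ω) =
      gaussianReal (∑ i, c i * μ i) (c ⬝ᵥ S *ᵥ c).toNNReal) (i j : ι) :
    HasLaw (fun ω => X i ω + X j ω) (gaussianReal (μ i + μ j)
      ((Pi.single i 1 + Pi.single j 1) ⬝ᵥ S *ᵥ (Pi.single i 1 + Pi.single j 1)).toNNReal) P := by
  have hsum (x : ι → ℝ) :
      ∑ k, (Pi.single i 1 + Pi.single j 1 : ι → ℝ) k * x k = x i + x j := by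
    rw [← dotProduct, add_dotProduct, single_one_dotProduct, single_one_dotProduct]
  have hmap := hX (Pi.single i 1 + Pi.single j 1)
  simp only [hsum] at hmap
  exact ⟨aemeasurable_of_map_neZero (hmap ▸ inferInstance), hmap⟩

theorem exists_hasSubgaussianMGF_add_of_map_sum_mul (hS : S.PosDef)
    (hX : ∀ c : ι → ℝ, P.map (fun ω => ∑ i, c i * X i ω) =
      gaussianReal (∑ i, c i * μ i) (c ⬝ᵥ S *ᵥ c).toNNReal) {i j : ι} (hij : i ≠ j) :
    ∃ k, ∃ c < 4 * (S k k).toNNReal,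
      HasSubgaussianMGF (fun ω => X i ω + X j ω - (μ i + μ j)) c P := by
  classical
  obtain ⟨k, hk⟩ := exists_single_add_single_dotProduct_mulVec_lt hS hij
  refine ⟨k, _, ?_, hasSubgaussianMGF_sub_of_hasLaw_gaussianReal (hasLaw_add_of_map_sum_mul hX i j)⟩
  have hpos : 0 < 4 * S k k := mul_pos four_pos hS.diag_pos
  simpa [Real.toNNReal_mul] using (Real.toNNReal_lt_toNNReal_iff hpos).2 hk

end JointlyGaussian

theorem stmt11 (n : ℕ) (hn : 1 ≤ n)
    (Ω : Type*) [MeasureSpace Ω] [IsProbabilityMeasure (volume : Measure Ω)]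
    (X : Fin n → Ω → ℝ) (hmeas : ∀ i, Measurable (X i))
    (μ : Fin n → ℝ) (S : Matrix (Fin n) (Fin n) ℝ) (hS : S.PosDef)
    (hGauss : ∀ c : Fin n → ℝ,
      Measure.map (fun ω => ∑ i, c i * X i ω) volume
        = gaussianReal (∑ i, c i * μ i) (Real.toNNReal (c ⬝ᵥ S.mulVec c))) :
    Tendsto (fun b : ℝ =>
        ((volume : Measure Ω) {ω | ∑ i, exp (X i ω) > b}).toReal
          / ∑ i, ((volume : Measure Ω) {ω | exp (X i ω) > b}).toReal)
      atTop (nhds 1) := by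
  have : Nonempty (Fin n) := ⟨⟨0, hn⟩⟩
  exact stmt11_general (hasLaw_apply_of_map_sum_mul hGauss)
    (fun i => (toNNReal_pos.2 hS.diag_pos).ne')
    fun _ _ => exists_hasSubgaussianMGF_add_of_map_sum_mul hS hGauss
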